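/- Let p > 2 and n ≥ 1. Define U : ℝⁿ×ℝⁿ → ℝ by U(x,y) = (1/2)·(p/(p−1))^{p−1}·(|y| − (p−1)|x|)·(|x|+|y|)^{p−1} if |x|+|y| ≤ 1 − 1/p, and U(x,y) = (p²/4)·[ |y|² − |x|² − 2(p−2)|y|/p + (p−1)²(p−2)/p³ ] if |x|+|y| > 1 − 1/p. Then for all x, y ∈ ℝⁿ one has U(x,y) ≥ p·max{|y| − 1 + 1/p, 0} − (p^{p−1}/2)·|x|^p. -/

import Mathlib

/-!
Write `a = ‖x‖`, `b = ‖y‖`. Both branches reduce to the tangent-line (Bernoulli) inequality for a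
power function.

* On `a + b ≤ 1 - 1/p` the maximum vanishes. With `r = (a + b) / (p - 1)` the claim becomes
  `(p a - (p - 1) r) r ^ (p - 1) ≤ a ^ p`, which says that `a ↦ a ^ p` lies above its tangent at
  `r` (`tangent_le_rpow`).
* On the other branch the constraint `a + b > 1 - 1/p` plays no role. The terms in `a` are minimised
  at `a = 1/p` by the tangent inequality for `t ↦ t ^ (p / 2)` at `1`, with `t = (p a) ^ 2`
  (`sq_le_rpow`). What remains is quadratic in `b`: if `b ≤ 1 - 1/p` it is
  a multiple of `(b - (p - 2) / p) ^ 2`, and otherwise a multiple of `(b - 1) ^ 2`.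
-/

open Real

/-- The weak-type special function for `p > 2`. -/
noncomputable def UweakHigh (p : ℝ) {n : ℕ} (x y : EuclideanSpace ℝ (Fin n)) : ℝ :=
  if ‖x‖ + ‖y‖ ≤ 1 - 1 / p then
    (1 / 2) * (p / (p - 1)) ^ (p - 1) * (‖y‖ - (p - 1) * ‖x‖) * (‖x‖ + ‖y‖) ^ (p - 1)
  else
    (p ^ 2 / 4) * (‖y‖ ^ 2 - ‖x‖ ^ 2 - 2 * (p - 2) * ‖y‖ / p +
      (p - 1) ^ 2 * (p - 2) / p ^ 3)

/-- The graph of `a ↦ a ^ p` lies above its tangent at `r`, in a form also valid for `r = 0`. -/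
lemma tangent_le_rpow {p a r : ℝ} (hp : 1 < p) (ha : 0 ≤ a) (hr : 0 ≤ r) :
    (p * a - (p - 1) * r) * r ^ (p - 1) ≤ a ^ p := by
  rcases hr.eq_or_lt with rfl | hr
  · rw [Real.zero_rpow (by linarith), mul_zero]
    positivity
  · have h := one_add_mul_self_le_rpow_one_add (s := a / r - 1) (p := p)
      (by have : 0 ≤ a / r := by positivity
          linarith) hp.le
    rw [add_sub_cancel, Real.div_rpow ha hr.le, le_div_iff₀ (by positivity)] at h
    have e : r ^ p = r ^ (p - 1) * r := by
      rw [← Real.rpow_add_one hr.ne', sub_add_cancel]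
    calc (p * a - (p - 1) * r) * r ^ (p - 1)
        = (1 + p * (a / r - 1)) * r ^ p := by rw [e]; field_simp; ring
      _ ≤ a ^ p := h

lemma sq_le_rpow {p a : ℝ} (hp : 2 < p) (ha : 0 ≤ a) :
    p ^ 2 * a ^ 2 / 4 - (p - 2) / (4 * p) ≤ p ^ (p - 1) / 2 * a ^ p := by
  have hp0 : 0 < p := by linarith
  have h := one_add_mul_self_le_rpow_one_add (s := (p * a) ^ 2 - 1) (p := p / 2)
    (by nlinarith [sq_nonneg (p * a)]) (by linarith)
  have e : ((p * a) ^ 2) ^ (p / 2) = p ^ (p - 1) * p * a ^ p := by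
    rw [← Real.rpow_natCast (p * a) 2, ← Real.rpow_mul (by positivity),
      Real.mul_rpow hp0.le (by norm_num [ha]), ← Real.rpow_add_one hp0.ne', sub_add_cancel]
    congr 2 <;> push_cast <;> ring
  rw [add_sub_cancel, e] at h
  have h2 : (1 + p / 2 * ((p * a) ^ 2 - 1)) / (2 * p) ≤
      (p ^ (p - 1) * p * a ^ p) / (2 * p) := by gcongr
  calc _ = (1 + p / 2 * ((p * a) ^ 2 - 1)) / (2 * p) := by field_simp; ring
    _ ≤ _ := h2
    _ = _ := by field_simp

/-- The majorization `U(x,y) ≥ p·max{|y| − 1 + 1/p, 0} − (p^{p−1}/2)|x|^p` for `p > 2`. -/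
theorem stmt_16 (p : ℝ) (hp : 2 < p) (n : ℕ) (hn : 1 ≤ n)
    (x y : EuclideanSpace ℝ (Fin n)) :
    p * max (‖y‖ - 1 + 1 / p) 0 - (p ^ (p - 1) / 2) * ‖x‖ ^ p ≤ UweakHigh p x y := by
  have ha := norm_nonneg x
  have hb := norm_nonneg y
  unfold UweakHigh
  generalize ‖x‖ = a at *
  generalize ‖y‖ = b at *
  have hp0 : 0 < p := by linarith
  have hp1 : 0 < p - 1 := by linarith
  split_ifs with hc
  · rw [max_eq_right (by linarith), mul_zero, zero_sub]
    have h := tangent_le_rpow (p := p) (a := a) (r := (a + b) / (p - 1)) (by linarith) ha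
      (by positivity)
    rw [mul_div_cancel₀ _ hp1.ne', Real.div_rpow (by positivity) hp1.le] at h
    have h2 := mul_le_mul_of_nonneg_left h (show 0 ≤ p ^ (p - 1) / 2 by positivity)
    rw [Real.div_rpow hp0.le hp1.le]
    have e : 1 / 2 * (p ^ (p - 1) / (p - 1) ^ (p - 1)) * (b - (p - 1) * a) * (a + b) ^ (p - 1)
        = -(p ^ (p - 1) / 2 *
          ((p * a - (a + b)) * ((a + b) ^ (p - 1) / (p - 1) ^ (p - 1)))) := by ring
    rw [e]
    linarith
  · have h := sq_le_rpow hp ha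
    rcases max_choice (b - 1 + 1 / p) 0 with hm | hm <;> rw [hm]
    · have e : p ^ 2 / 4 * (b ^ 2 - a ^ 2 - 2 * (p - 2) * b / p + (p - 1) ^ 2 * (p - 2) / p ^ 3)
          = p * (b - 1 + 1 / p) + p ^ 2 / 4 * (b - 1) ^ 2
            - (p ^ 2 * a ^ 2 / 4 - (p - 2) / (4 * p)) := by
        field_simp
        ring
      have : 0 ≤ p ^ 2 / 4 * (b - 1) ^ 2 := by positivity
      linarith
    · have e : p ^ 2 / 4 * (b ^ 2 - a ^ 2 - 2 * (p - 2) * b / p + (p - 1) ^ 2 * (p - 2) / p ^ 3)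
          = p ^ 2 / 4 * (b - (p - 2) / p) ^ 2
            - (p ^ 2 * a ^ 2 / 4 - (p - 2) / (4 * p)) := by
        field_simp
        ring
      have : 0 ≤ p ^ 2 / 4 * (b - (p - 2) / p) ^ 2 := by positivity
      linarith
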